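/- Let n ∈ ℕ and let x : (Fin n → Fin 4) → ℝ satisfy x(0) = 0, where 0 is the all-identity string. Define τ : (Fin n → Fin 4) → ℝ by τ(0) = 0 and, for b ≠ 0, τ(b) = −(2/4ⁿ) · Σ_a (−1)^{N(a,b)} x(a), the sum over all a : Fin n → Fin 4. Then for every a : Fin n → Fin 4, Σ_b ⟨a,b⟩ · τ(b) = x(a), where ⟨a,b⟩ ∈ {0,1} ⊆ ℝ is the symplectic indicator and the sum is over all b : Fin n → Fin 4. -/

import Mathlib

/-!
The signs `χ(a,b) = (-1)^{N(a,b)}` factor over the coordinates into the single-qubit sign table,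
whose rows are orthogonal with squared norm `4`; hence `Σ_b χ(a,b) χ(c,b) = 4ⁿ δ_{ac}`
(`sum_sign_mul_sign`). Since `⟨a,b⟩ = (1 - χ(a,b)) / 2` and `1 = χ(0,b)`, substituting the formula
for `τ` and exchanging sums gives `Σ_b ⟨a,b⟩ τ_b = -(x 0 - x a) = x a`. The formula for `τ` may be
used at `b = 0` as well, because `⟨a,0⟩ = 0`.
-/

/-- Two single-qubit Pauli labels anticommute iff both are non-identity and distinct. -/
def pauliAnti (p q : Fin 4) : Prop := p ≠ 0 ∧ q ≠ 0 ∧ p ≠ q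

instance (p q : Fin 4) : Decidable (pauliAnti p q) :=
  inferInstanceAs (Decidable (p ≠ 0 ∧ q ≠ 0 ∧ p ≠ q))

/-- The number of coordinates at which two Pauli strings anticommute. -/
def pauliN {n : ℕ} (a b : Fin n → Fin 4) : ℕ :=
  (Finset.univ.filter (fun i => pauliAnti (a i) (b i))).card

/-- The symplectic indicator `⟨a,b⟩ ∈ {0,1} ⊆ ℝ`: the parity of `pauliN a b`. -/
def sympInd {n : ℕ} (a b : Fin n → Fin 4) : ℝ := ((pauliN a b % 2 : ℕ) : ℝ)

lemma neg_one_pow_pauliN {n : ℕ} (a b : Fin n → Fin 4) :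
    (-1 : ℝ) ^ pauliN a b = ∏ i, if pauliAnti (a i) (b i) then (-1 : ℝ) else 1 := by
  rw [pauliN, Finset.prod_ite]
  simp

lemma pauliN_zero_left {n : ℕ} (b : Fin n → Fin 4) : pauliN 0 b = 0 := by
  simp [pauliN, pauliAnti]

lemma pauliN_zero_right {n : ℕ} (a : Fin n → Fin 4) : pauliN a 0 = 0 := by
  simp [pauliN, pauliAnti]

lemma sympInd_eq {n : ℕ} (a b : Fin n → Fin 4) :
    sympInd a b = (1 - (-1 : ℝ) ^ pauliN a b) / 2 := by
  rw [sympInd]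
  rcases Nat.even_or_odd (pauliN a b) with h | h
  · rw [h.neg_one_pow, Nat.even_iff.mp h]; norm_num
  · rw [h.neg_one_pow, Nat.odd_iff.mp h]; norm_num

/-- Orthogonality of the rows of the single-qubit sign table. -/
lemma single_qubit_orthogonality (p q : Fin 4) :
    (∑ r : Fin 4, (if pauliAnti p r then (-1 : ℝ) else 1) * (if pauliAnti q r then (-1 : ℝ) else 1))
      = if p = q then 4 else 0 := by
  fin_cases p <;> fin_cases q <;> simp [Fin.sum_univ_four, pauliAnti] <;> norm_num

/-- Orthogonality of the rows of the `n`-qubit sign table. -/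
lemma sum_sign_mul_sign {n : ℕ} (a c : Fin n → Fin 4) :
    (∑ b : Fin n → Fin 4, (-1 : ℝ) ^ pauliN a b * (-1 : ℝ) ^ pauliN c b)
      = if a = c then (4 : ℝ) ^ n else 0 := by
  simp_rw [neg_one_pow_pauliN, ← Finset.prod_mul_distrib]
  have h := Finset.prod_univ_sum (fun _ : Fin n => (Finset.univ : Finset (Fin 4)))
    (fun i r => (if pauliAnti (a i) r then (-1 : ℝ) else 1) *
      (if pauliAnti (c i) r then (-1 : ℝ) else 1))
  rw [Fintype.piFinset_univ] at h
  rw [← h]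
  simp_rw [single_qubit_orthogonality]
  split_ifs with hac
  · simp [hac]
  · obtain ⟨i, hi⟩ := Function.ne_iff.mp hac
    exact Finset.prod_eq_zero (Finset.mem_univ i) (if_neg hi)

/-- Fourier-type reconstruction: if `x 0 = 0` and `τ` is defined by `τ 0 = 0` and
`τ b = −(2/4ⁿ) Σ_a (−1)^{N(a,b)} x a` for `b ≠ 0`, then
`Σ_b ⟨a,b⟩ τ b = x a` for every `a`. -/
theorem symplectic_reconstruction (n : ℕ) (x : (Fin n → Fin 4) → ℝ)
    (hx : x 0 = 0) (τ : (Fin n → Fin 4) → ℝ) (hτ0 : τ 0 = 0)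
    (hτ : ∀ b, b ≠ 0 → τ b =
      -(2 / (4 : ℝ) ^ n) * ∑ a : Fin n → Fin 4, (-1 : ℝ) ^ (pauliN a b) * x a) :
    ∀ a, (∑ b : Fin n → Fin 4, sympInd a b * τ b) = x a := by
  intro a
  have hterm : ∀ b, sympInd a b * τ b = ∑ c : Fin n → Fin 4, -(1 / (4 : ℝ) ^ n) *
      (((-1 : ℝ) ^ pauliN 0 b * (-1 : ℝ) ^ pauliN c b
        - (-1 : ℝ) ^ pauliN a b * (-1 : ℝ) ^ pauliN c b) * x c) := by
    intro b
    by_cases hb : b = 0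
    · subst hb
      simp [hτ0, pauliN_zero_right]
    · rw [hτ b hb, sympInd_eq, ← mul_assoc, Finset.mul_sum]
      refine Finset.sum_congr rfl fun c _ => ?_
      rw [pauliN_zero_left]
      ring
  simp_rw [hterm]
  rw [Finset.sum_comm]
  simp_rw [← Finset.mul_sum, ← Finset.sum_mul, Finset.sum_sub_distrib, sum_sign_mul_sign,
    sub_mul, ite_mul, zero_mul, Finset.sum_sub_distrib]
  simp [hx]
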